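/- arXiv:2503.11783 — 8 statements merged into one kernel-verified Lean document; each statement's English description precedes it below -/
import Mathlib

section
/- Fix a natural number n ≥ 1. Define F(γ) = 2/(1 + (1-γ)^{-n}) + n·γ/((1-γ)^{1-n} + (1-γ)). Then F(γ) = 1 - (n² - n)·γ²/4 + O(γ³) as γ → 0⁺. -/
/-!
With `q = 1 - γ` the two denominators are `1 + q ^ (-s)` and `q (1 + q ^ (-s))`, so the fidelity is
`(2 + sγ / q) / (1 + q ^ (-s))`. This denominator is at least `1`, so it is enough to compare the
numerator with `(1 - (s² - s) γ² / 4) (1 + q ^ (-s))` up to `O(γ³)`. By the binomial series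
`q ^ (-s) = 1 + sγ + s (s + 1) / 2 γ² + O(γ³)`, both are `2 + sγ + sγ² + O(γ³)`.
-/

open Asymptotics Filter Topology

lemma exists_forall_norm_le_of_isBigO_nhdsGT {α E F : Type*} [LinearOrder α] [TopologicalSpace α]
    [OrderTopology α] [DenselyOrdered α] [Norm E] [SeminormedAddCommGroup F]
    {f : α → E} {g : α → F} {a b : α} (hab : a < b) (h : f =O[𝓝[>] a] g) :
    ∃ C : ℝ, 0 < C ∧ ∃ c : α, a < c ∧ c < b ∧ ∀ x, a < x → x < c → ‖f x‖ ≤ C * ‖g x‖ := by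
  obtain ⟨C, hC, hfg⟩ := h.exists_pos
  obtain ⟨u, hu, hbound⟩ := (nhdsGT_basis_of_exists_gt ⟨b, hab⟩).eventually_iff.mp hfg.bound
  obtain ⟨c, hac, hcb⟩ := exists_between (lt_min hu hab)
  exact ⟨C, hC, c, hac, hcb.trans_le (min_le_right _ _), fun x hax hxc ↦
    hbound ⟨hax, hxc.trans (hcb.trans_le (min_le_left _ _))⟩⟩

lemma one_sub_rpow_neg_sub_sum_isBigO (s : ℝ) (N : ℕ) :
    (fun x : ℝ ↦ (1 - x) ^ (-s) - ∑ k ∈ Finset.range N, Ring.choose (s + k - 1) k * x ^ k)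
      =O[𝓝 0] fun x ↦ x ^ N := by
  have hseries := (Real.one_div_one_sub_rpow_hasFPowerSeriesOnBall_zero s).hasFPowerSeriesAt
  have htail := hseries.isBigO_sub_partialSum_pow N
  simp only [← norm_pow, isBigO_norm_right] at htail
  refine htail.congr' ?_ .rfl
  filter_upwards [eventually_lt_nhds zero_lt_one] with x hx
  simp [FormalMultilinearSeries.partialSum, Real.rpow_neg (sub_nonneg.mpr hx.le), mul_comm]

lemma one_sub_rpow_neg_sub_quadratic_isBigO (s : ℝ) :
    (fun x : ℝ ↦ (1 - x) ^ (-s) - (1 + s * x + s * (s + 1) / 2 * x ^ 2))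
      =O[𝓝 0] fun x ↦ x ^ 3 := by
  have hpochhammer : (descPochhammer ℤ 2).smeval (s + 1) = (s + 1) * s := by
    simp [descPochhammer_succ_right, Polynomial.smeval_mul, Polynomial.smeval_sub]
  have hchoose : Ring.choose (s + 1) 2 = s * (s + 1) / 2 := by
    rw [Ring.choose_eq_smul, hpochhammer, Nat.factorial_two, smul_eq_mul, Nat.cast_two]
    ring
  refine (one_sub_rpow_neg_sub_sum_isBigO s 3).congr_left fun x ↦ ?_
  have hshift : s + 2 - 1 = s + 1 := by ring
  simp [Finset.sum_range_succ, hshift, hchoose]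

lemma div_one_add_rpow_neg_add_div_rpow_one_sub_add {q : ℝ} (hq : 0 < q) (s a b : ℝ) :
    a / (1 + q ^ (-s)) + b / (q ^ (1 - s) + q) = (a + b / q) / (1 + q ^ (-s)) := by
  have hfactor : q ^ (1 - s) + q = q * (1 + q ^ (-s)) := by
    rw [sub_eq_add_neg, Real.rpow_add hq, Real.rpow_one]
    ring
  rw [hfactor, add_div, div_div]

lemma inv_one_add_isBigO_one {α : Type*} {l : Filter α} {f : α → ℝ} (hf : ∀ᶠ x in l, 0 ≤ f x) :
    (fun x ↦ (1 + f x)⁻¹) =O[l] fun _ ↦ (1 : ℝ) := by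
  refine .of_bound 1 ?_
  filter_upwards [hf] with x hx
  rw [norm_one, mul_one, Real.norm_of_nonneg (by positivity)]
  exact inv_le_one_of_one_le₀ (le_add_of_nonneg_right hx)

lemma fidelity_numerator_sub_isBigO (s : ℝ) :
    (fun γ : ℝ ↦ 2 + s * γ / (1 - γ) - (1 - (s ^ 2 - s) * γ ^ 2 / 4) * (1 + (1 - γ) ^ (-s)))
      =O[𝓝 0] fun γ ↦ γ ^ 3 := by
  let c := (s ^ 2 - s) / 4
  let p (γ : ℝ) := s / (1 - γ) + c * (s + s * (s + 1) / 2 * γ)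
  let R (γ : ℝ) := (1 - γ) ^ (-s) - (1 + s * γ + s * (s + 1) / 2 * γ ^ 2)
  have hp : (fun γ ↦ p γ * γ ^ 3) =O[𝓝 0] fun γ ↦ γ ^ 3 := by
    have hp_cont : ContinuousAt p 0 := by fun_prop (disch := norm_num)
    simpa only [one_mul] using (hp_cont.isBigO_one ℝ).mul (isBigO_refl (fun γ ↦ γ ^ 3) (𝓝 0))
  have hR : (fun γ ↦ (1 - c * γ ^ 2) * R γ) =O[𝓝 0] fun γ ↦ γ ^ 3 := by
    have hc_cont : ContinuousAt (fun γ ↦ 1 - c * γ ^ 2) 0 := by fun_prop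
    simpa only [one_mul] using
      (hc_cont.isBigO_one ℝ).mul (one_sub_rpow_neg_sub_quadratic_isBigO s)
  refine (hp.sub hR).congr' ?_ .rfl
  filter_upwards [eventually_lt_nhds zero_lt_one] with γ hγ
  -- The coefficient of `γ ^ 2` cancels because `s - s * (s + 1) / 2 + 2 * c = 0`.
  have hq : 1 - γ ≠ 0 := (sub_pos.mpr hγ).ne'
  simp only [p, R, c]
  field_simp
  ring

theorem stmt_6_general (s : ℝ) :
    (fun γ : ℝ ↦ 2 / (1 + (1 - γ) ^ (-s)) + s * γ / ((1 - γ) ^ (1 - s) + (1 - γ))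
      - (1 - (s ^ 2 - s) * γ ^ 2 / 4)) =O[𝓝 0] fun γ ↦ γ ^ 3 := by
  have hlt : ∀ᶠ γ : ℝ in 𝓝 0, γ < 1 := eventually_lt_nhds zero_lt_one
  have hden : (fun γ : ℝ ↦ (1 + (1 - γ) ^ (-s))⁻¹) =O[𝓝 0] fun _ ↦ (1 : ℝ) :=
    inv_one_add_isBigO_one <| hlt.mono fun _ hγ ↦ Real.rpow_nonneg (sub_nonneg.mpr hγ.le) _
  refine ((fidelity_numerator_sub_isBigO s).mul hden).congr' ?_ (by simp)
  filter_upwards [hlt] with γ hγ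
  have hq : 0 < 1 - γ := sub_pos.mpr hγ
  rw [div_one_add_rpow_neg_add_div_rpow_one_sub_add hq, ← div_eq_mul_inv, sub_div,
    mul_div_cancel_right₀ _ (by positivity)]

/-- Worst-case fidelity of the NSA ((n,k)) self-complementary AD code:
`F(γ) = 2/(1+(1-γ)^{-n}) + nγ/((1-γ)^{1-n}+(1-γ)) = 1 - (n²-n)γ²/4 + O(γ³)` as `γ → 0⁺`. -/
theorem stmt_6 (n : ℕ) (hn : 1 ≤ n) :
    ∃ C : ℝ, 0 < C ∧ ∃ δ : ℝ, 0 < δ ∧ δ < 1 ∧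
      ∀ γ : ℝ, 0 < γ → γ < δ →
        |2 / (1 + (1 - γ) ^ (-(n : ℤ)))
          + n * γ / ((1 - γ) ^ (1 - (n : ℤ)) + (1 - γ))
          - (1 - ((n : ℝ) ^ 2 - (n : ℝ)) * γ ^ 2 / 4)| ≤ C * γ ^ 3 := by
  obtain ⟨C, hC, δ, hδ, hδ1, hbound⟩ := exists_forall_norm_le_of_isBigO_nhdsGT zero_lt_one
    ((stmt_6_general n).mono nhdsWithin_le_nhds)
  refine ⟨C, hC, δ, hδ, hδ1, fun γ hγ hγδ ↦ ?_⟩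
  simpa [← Real.rpow_intCast, abs_of_pos hγ] using hbound γ hγ hγδ
end

section
/- Fix a natural number n ≥ 1 and let h = ⌊n/2⌋. Define F_NSA(γ) = 2/(1+(1-γ)^{-n}) + nγ/((1-γ)^{1-n}+(1-γ)) and F_nonNSA(γ) = ((1-γ)^h + (1-γ)^{n-h})/2 + nγ(1-γ)^{n-1}/2. Then F_NSA(γ) - F_nonNSA(γ) = ((2nh - 2h²)/4)·γ² + O(γ³) as γ → 0⁺. -/
/-!
With `q = 1 - γ`, the two fidelities differ by the exact amount
`(1 - q ^ h) (1 - q ^ (n - h)) / 2 - (1 - q ^ n) (1 - q ^ n - n γ q ^ (n - 1)) / (2 (1 + q ^ n))`.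
Since `1 - q ^ s = s γ + O(γ²)`, the first term is `h (n - h) γ² / 2 + O(γ³)`. In the second term
the linear parts of `1 - q ^ n` and `n γ q ^ (n - 1)` cancel, so it is `O(γ) · O(γ²)`.
-/

open Asymptotics Filter Set
open scoped Topology

lemma exists_norm_le_on_Ioo_of_isBigO_nhdsGT {α E F : Type*} [LinearOrder α] [DenselyOrdered α]
    [TopologicalSpace α] [OrderTopology α] [Norm E] [SeminormedAddCommGroup F] {f : α → E}
    {g : α → F} {a b : α} (hab : a < b) (hfg : f =O[𝓝[>] a] g) :
    ∃ C > 0, ∃ δ ∈ Ioo a b, ∀ x ∈ Ioo a δ, ‖f x‖ ≤ C * ‖g x‖ := by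
  obtain ⟨C, hC, hbound⟩ := hfg.exists_pos
  obtain ⟨c, hac, hcb⟩ := exists_between hab
  obtain ⟨δ, hδ, hsub⟩ := (mem_nhdsGT_iff_exists_mem_Ioc_Ioo_subset hac).1 hbound.bound
  exact ⟨C, hC, δ, ⟨hδ.1, hδ.2.trans_lt hcb⟩, hsub⟩

section OneSubRpow

variable (s t : ℝ)

lemma one_sub_one_sub_rpow_sub_mul_isBigO :
    (fun x : ℝ ↦ 1 - (1 - x) ^ s - s * x) =O[𝓝 0] (· ^ 2) := by
  have binomial := (Real.one_add_rpow_hasFPowerSeriesAt_zero (a := s)).isBigO_sub_partialSum_pow 2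
  have neg_tendsto : Tendsto (fun x : ℝ ↦ -x) (𝓝 0) (𝓝 0) := by
    simpa only [neg_zero] using tendsto_neg (0 : ℝ)
  have partialSum_two (y : ℝ) : (binomialSeries ℝ s).partialSum 2 y = 1 + s * y := by
    simp [FormalMultilinearSeries.partialSum, Finset.sum_range_succ, binomialSeries, mul_comm]
  refine (binomial.comp_tendsto neg_tendsto).neg_left.congr (fun x ↦ ?_) (fun x ↦ ?_)
  · simp only [Function.comp_apply, zero_add, partialSum_two, ← sub_eq_add_neg]
    ring
  · simp

lemma one_sub_one_sub_rpow_isBigO : (fun x : ℝ ↦ 1 - (1 - x) ^ s) =O[𝓝 0] id := by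
  have quadratic := (one_sub_one_sub_rpow_sub_mul_isBigO s).trans_isLittleO
    (isLittleO_pow_id one_lt_two)
  have linear := (isBigO_refl (id : ℝ → ℝ) (𝓝 0)).const_mul_left s
  exact (quadratic.isBigO.add linear).congr_left fun x ↦ sub_add_cancel _ _

lemma one_sub_rpow_mul_one_sub_rpow_sub_isBigO :
    (fun x : ℝ ↦ (1 - (1 - x) ^ s) * (1 - (1 - x) ^ t) - s * t * x ^ 2) =O[𝓝 0] (· ^ 3) := by
  have left_error := (one_sub_one_sub_rpow_sub_mul_isBigO s).mul (one_sub_one_sub_rpow_isBigO t)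
  have right_error := ((isBigO_refl (id : ℝ → ℝ) (𝓝 0)).mul
    (one_sub_one_sub_rpow_sub_mul_isBigO t)).const_mul_left s
  refine ((left_error.congr_right ?_).add
    (right_error.congr_right ?_)).congr_left ?_ <;>
    intro x <;> simp only [id] <;> ring

lemma one_sub_rpow_sub_mul_rpow_sub_one_isBigO :
    (fun x : ℝ ↦ 1 - (1 - x) ^ s - s * x * (1 - x) ^ (s - 1)) =O[𝓝 0] (· ^ 2) := by
  have linear := ((isBigO_refl (id : ℝ → ℝ) (𝓝 0)).mul
    (one_sub_one_sub_rpow_isBigO (s - 1))).const_mul_left s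
  refine ((one_sub_one_sub_rpow_sub_mul_isBigO s).add (linear.congr_right ?_)).congr_left ?_ <;>
    intro x <;> simp only [id] <;> ring

end OneSubRpow

/-- The worst-case fidelity `F_NSA(γ)` of the noise-strength-adapted code, with the code length `n`
allowed to be any real number. -/
noncomputable def nsaFidelity (n γ : ℝ) : ℝ :=
  2 / (1 + (1 - γ) ^ (-n)) + n * γ / ((1 - γ) ^ (1 - n) + (1 - γ))

/-- The fidelity `F_nonNSA(γ)` of the non-adapted code of real length `n`, with a real
parameter `h` in place of `⌊n / 2⌋`. -/
noncomputable def nonNSAFidelity (n h γ : ℝ) : ℝ :=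
  ((1 - γ) ^ h + (1 - γ) ^ (n - h)) / 2 + n * γ * (1 - γ) ^ (n - 1) / 2

lemma nsaFidelity_natCast (n : ℕ) (γ : ℝ) :
    nsaFidelity n γ = 2 / (1 + (1 - γ) ^ (-(n : ℤ)))
      + n * γ / ((1 - γ) ^ (1 - (n : ℤ)) + (1 - γ)) := by
  simp only [nsaFidelity, ← Real.rpow_intCast, Int.cast_neg, Int.cast_sub, Int.cast_one,
    Int.cast_natCast]

lemma nonNSAFidelity_natCast {n h : ℕ} (hn : 1 ≤ n) (hhn : h ≤ n) (γ : ℝ) :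
    nonNSAFidelity n h γ =
      ((1 - γ) ^ h + (1 - γ) ^ (n - h)) / 2 + n * γ * (1 - γ) ^ (n - 1) / 2 := by
  simp only [nonNSAFidelity, ← Real.rpow_natCast, Nat.cast_sub hn, Nat.cast_sub hhn, Nat.cast_one]

lemma nsaFidelity_eq_div (n : ℝ) {γ : ℝ} (hγ : γ < 1) :
    nsaFidelity n γ =
      (2 * (1 - γ) ^ n + n * γ * (1 - γ) ^ (n - 1)) / (1 + (1 - γ) ^ n) := by
  have hq : 0 < 1 - γ := sub_pos.2 hγ
  rw [nsaFidelity, Real.rpow_neg hq.le, Real.rpow_sub hq, Real.rpow_sub hq, Real.rpow_one]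
  field_simp
  ring

lemma nsaFidelity_sub_nonNSAFidelity (n h : ℝ) {γ : ℝ} (hγ : γ < 1) :
    nsaFidelity n γ - nonNSAFidelity n h γ =
      (1 - (1 - γ) ^ h) * (1 - (1 - γ) ^ (n - h)) / 2
        - (1 - (1 - γ) ^ n) * (1 - (1 - γ) ^ n - n * γ * (1 - γ) ^ (n - 1))
          / (2 * (1 + (1 - γ) ^ n)) := by
  have hq : 0 < 1 - γ := sub_pos.2 hγ
  have hmul : (1 - γ) ^ h * (1 - γ) ^ (n - h) = (1 - γ) ^ n := by
    rw [← Real.rpow_add hq, add_sub_cancel]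
  rw [nsaFidelity_eq_div n hγ, nonNSAFidelity]
  field_simp
  linear_combination (-(1 + (1 - γ) ^ n)) * hmul

lemma one_sub_rpow_mul_div_isBigO (n : ℝ) :
    (fun γ : ℝ ↦ (1 - (1 - γ) ^ n) * (1 - (1 - γ) ^ n - n * γ * (1 - γ) ^ (n - 1))
      / (2 * (1 + (1 - γ) ^ n))) =O[𝓝 0] (· ^ 3) := by
  have numerator := (one_sub_one_sub_rpow_isBigO n).mul
    (one_sub_rpow_sub_mul_rpow_sub_one_isBigO n)
  refine (IsBigO.of_bound' ?_).trans (numerator.congr_right fun x ↦ (pow_succ' x 2).symm)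
  filter_upwards [eventually_lt_nhds one_pos] with γ hγ
  have hqn : 0 < (1 - γ) ^ n := Real.rpow_pos_of_pos (sub_pos.2 hγ) n
  rw [norm_div, Real.norm_of_nonneg (by positivity : 0 ≤ 2 * (1 + (1 - γ) ^ n))]
  have one_le_denominator : 1 ≤ 2 * (1 + (1 - γ) ^ n) := by linarith
  exact div_le_self (norm_nonneg _) one_le_denominator

theorem stmt_7_general (n h : ℝ) :
    (fun γ ↦ nsaFidelity n γ - nonNSAFidelity n h γ - (2 * n * h - 2 * h ^ 2) / 4 * γ ^ 2)
      =O[𝓝 0] (· ^ 3) := by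
  have main := (one_sub_rpow_mul_one_sub_rpow_sub_isBigO h (n - h)).const_mul_left (1 / 2)
  refine (main.sub (one_sub_rpow_mul_div_isBigO n)).congr' ?_ EventuallyEq.rfl
  filter_upwards [eventually_lt_nhds one_pos] with γ hγ
  rw [nsaFidelity_sub_nonNSAFidelity n h hγ]
  ring

/-- Fidelity advantage of the NSA over the non-NSA self-complementary code, `h = ⌊n/2⌋`:
`F_NSA(γ) - F_nonNSA(γ) = ((2nh-2h²)/4)γ² + O(γ³)` as `γ → 0⁺`. -/
theorem stmt_7 (n h : ℕ) (hn : 1 ≤ n) (hh : h = n / 2) :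
    ∃ C : ℝ, 0 < C ∧ ∃ δ : ℝ, 0 < δ ∧ δ < 1 ∧
      ∀ γ : ℝ, 0 < γ → γ < δ →
        |(2 / (1 + (1 - γ) ^ (-(n : ℤ)))
            + n * γ / ((1 - γ) ^ (1 - (n : ℤ)) + (1 - γ)))
          - (((1 - γ) ^ h + (1 - γ) ^ (n - h)) / 2 + n * γ * (1 - γ) ^ (n - 1) / 2)
          - ((2 * (n : ℝ) * (h : ℝ) - 2 * (h : ℝ) ^ 2) / 4) * γ ^ 2| ≤ C * γ ^ 3 := by
  have hhn : h ≤ n := hh ▸ Nat.div_le_self n 2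
  obtain ⟨C, hC, δ, ⟨hδ, hδ_lt⟩, hbound⟩ := exists_norm_le_on_Ioo_of_isBigO_nhdsGT one_pos
    ((stmt_7_general n h).mono nhdsWithin_le_nhds)
  refine ⟨C, hC, δ, hδ, hδ_lt, fun γ hγ hγ_lt ↦ ?_⟩
  rw [← nsaFidelity_natCast, ← nonNSAFidelity_natCast hn hhn]
  simpa [abs_of_pos hγ] using hbound γ ⟨hγ, hγ_lt⟩
end

section
/- Let q ≥ 1 and n be natural numbers. For a dit string u : Fin n → Fin q define u^{↑a} by (u^{↑a})_i = (u_i + a) mod q and ‖v‖ = Σ_i v_i. Then for every u and every index i ∈ Fin n, Σ_{a=0}^{q-1} (u^{↑a})_i · ‖u^{↑a}‖ ≤ n·(q-1)·q·(2q-1)/6, with equality when u is a constant dit string. -/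
/-!
For a fixed site `j` the digit `(u_j + a) mod q`, as a function of `a`, is the permutation "add
`u_j`" of `Fin q`. Exchanging the two sums turns the left-hand side into one correlation
`∑ a, (σ a) * (τ a)` of two such permutations for every site; by the rearrangement inequality each
of the `n` correlations is at most `∑ a, a²`, the value it takes when `σ = τ`.
-/

open Finset Equiv

section Rearrangement

variable {α ι R : Type*} [Fintype α] [Fintype ι] [Semiring R] [LinearOrder R]
  [IsStrictOrderedRing R] [ExistsAddOfLE R] {f g : α → R}

lemma sum_comp_perm_mul_comp_perm_le_of_monovary (hfg : Monovary f g) (σ τ : Perm α) :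
    ∑ a, f (σ a) * g (τ a) ≤ ∑ a, f a * g a :=
  calc ∑ a, f (σ a) * g (τ a)
    _ = ∑ a, f ((σ * τ⁻¹) a) * g a := by
      rw [← Equiv.sum_comp τ fun a => f ((σ * τ⁻¹) a) * g a]
      simp
    _ ≤ ∑ a, f a * g a := hfg.sum_comp_perm_mul_le_sum_mul

lemma sum_comp_perm_mul_sum_comp_perm_le_of_monovary (hfg : Monovary f g) (σ : Perm α)
    (τ : ι → Perm α) :
    ∑ a, f (σ a) * ∑ j, g (τ j a) ≤ Fintype.card ι • ∑ a, f a * g a :=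
  calc ∑ a, f (σ a) * ∑ j, g (τ j a)
    _ = ∑ j, ∑ a, f (σ a) * g (τ j a) := by simp only [mul_sum]; exact sum_comm
    _ ≤ Fintype.card ι • ∑ a, f a * g a :=
      sum_le_card_nsmul _ _ _ fun j _ => sum_comp_perm_mul_comp_perm_le_of_monovary hfg σ (τ j)

end Rearrangement

lemma sum_comp_perm_mul_sum_const_comp_perm {α R : Type*} [Fintype α]
    [NonUnitalNonAssocSemiring R] (ι : Type*) [Fintype ι] (f g : α → R) (σ : Perm α) :
    ∑ a, f (σ a) * ∑ _j : ι, g (σ a) = Fintype.card ι • ∑ a, f a * g a := by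
  simp only [sum_const, card_univ, mul_smul_comm, ← smul_sum,
    Equiv.sum_comp σ fun a => f a * g a]

lemma six_mul_sum_range_succ_sq (m : ℕ) :
    6 * ∑ a ∈ range (m + 1), a ^ 2 = m * (m + 1) * (2 * m + 1) := by
  induction m with
  | zero => simp
  | succ m ih => rw [sum_range_succ, mul_add, ih]; ring

lemma mul_sum_fin_mul_self_eq_div (q n : ℕ) :
    n * ∑ a : Fin q, (a : ℕ) * a = n * (q - 1) * q * (2 * q - 1) / 6 := by
  obtain _ | m := q
  · simp
  refine (Nat.div_eq_of_eq_mul_right (by norm_num) ?_).symm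
  calc n * (m + 1 - 1) * (m + 1) * (2 * (m + 1) - 1)
    _ = n * (m * (m + 1) * (2 * m + 1)) := by
      rw [Nat.add_sub_cancel, show 2 * (m + 1) - 1 = 2 * m + 1 by lia]; ring
    _ = 6 * (n * ∑ a : Fin (m + 1), (a : ℕ) * a) := by
      rw [← six_mul_sum_range_succ_sq, ← Fin.sum_univ_eq_sum_range (fun a => a ^ 2)]
      simp only [sq, mul_left_comm]

/-- `Σ_a (u^{↑a})_i·‖u^{↑a}‖ ≤ n(q-1)q(2q-1)/6` for every dit string `u` and site `i`,
with equality when `u` is a constant dit string. -/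
theorem stmt_10 (q n : ℕ) (hq : 1 ≤ q) :
    (∀ u : Fin n → Fin q, ∀ i : Fin n,
      ∑ a : Fin q, (((u i : ℕ) + (a : ℕ)) % q)
          * (∑ j : Fin n, (((u j : ℕ) + (a : ℕ)) % q))
        ≤ n * (q - 1) * q * (2 * q - 1) / 6) ∧
    (∀ c : Fin q, ∀ i : Fin n,
      ∑ a : Fin q, (((c : ℕ) + (a : ℕ)) % q)
          * (∑ j : Fin n, (((c : ℕ) + (a : ℕ)) % q))
        = n * (q - 1) * q * (2 * q - 1) / 6) := by
  have : NeZero q := ⟨Nat.one_le_iff_ne_zero.mp hq⟩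
  have digits_monovary : Monovary (Fin.val : Fin q → ℕ) Fin.val := monovary_self _
  rw [← mul_sum_fin_mul_self_eq_div]
  constructor
  · intro u i
    simpa only [Equiv.coe_addLeft, Fin.val_add, Fintype.card_fin, smul_eq_mul] using
      sum_comp_perm_mul_sum_comp_perm_le_of_monovary digits_monovary
        (Equiv.addLeft (u i)) (fun j => Equiv.addLeft (u j))
  · intro c _
    simpa only [Equiv.coe_addLeft, Fin.val_add, Fintype.card_fin, smul_eq_mul] using
      sum_comp_perm_mul_sum_const_comp_perm (Fin n) Fin.val Fin.val (Equiv.addLeft c)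
end

section
/- Let q ≥ 1 and n be natural numbers with q dividing n, and let γ ∈ [0,1]. For every dit string u : Fin n → Fin q (with u^{↑a} the digit-shift by a mod q and ‖·‖ the sum of digits), Σ_{a=0}^{q-1} (1-γ)^{‖u^{↑a}‖} ≥ q·(1-γ)^{n(q-1)/2}; moreover there exists u attaining equality, so min over u of (1/q)·Σ_a (1-γ)^{‖u^{↑a}‖} equals (1-γ)^{n(q-1)/2}. -/
/-!
As `a` varies, each digit of `u^{↑a}` runs once through `0, …, q - 1`, so the `q` weights
`‖u^{↑a}‖` average to `n(q - 1)/2`. By AM-GM the mean of the powers `x ^ ‖u^{↑a}‖` is at least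
their geometric mean `x ^ (n(q - 1)/2)`; unlike Jensen for `exp (t log x)`, this covers `x = 0`.
Equality holds for a string in which every digit occurs equally often, since then all its shifts
have the same weight.
-/

open Finset

theorem card_mul_pow_le_sum_pow {ι : Type*} (s : Finset ι) {x : ℝ} (hx : 0 ≤ x) {k : ι → ℕ} {m : ℕ}
    (hk : ∑ i ∈ s, k i = #s * m) : #s * x ^ m ≤ ∑ i ∈ s, x ^ k i := by
  obtain rfl | hs := s.eq_empty_or_nonempty
  · simp
  have hcard : (0 : ℝ) < #s := by exact_mod_cast hs.card_pos
  have amgm : (∏ i ∈ s, x ^ k i) ^ (#s : ℝ)⁻¹ ≤ (∑ i ∈ s, x ^ k i) / #s := by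
    simpa using Real.geom_mean_le_arith_mean s (fun _ ↦ 1) (fun i ↦ x ^ k i)
      (fun _ _ ↦ zero_le_one) (by simpa using hs.card_pos) (fun i _ ↦ pow_nonneg hx (k i))
  have geom_mean : (∏ i ∈ s, x ^ k i) ^ (#s : ℝ)⁻¹ = x ^ m := by
    rw [prod_pow_eq_pow_sum, hk, mul_comm, pow_mul,
      Real.pow_rpow_inv_natCast (pow_nonneg hx m) hs.card_pos.ne']
  rwa [geom_mean, le_div_iff₀' hcard] at amgm

theorem sum_add_mod_mul_two (q b : ℕ) : (∑ a : Fin q, (b + a) % q) * 2 = q * (q - 1) := by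
  obtain rfl | hq := eq_or_ne q 0
  · simp
  have : NeZero q := ⟨hq⟩
  have shift_invariant : ∑ a : Fin q, (b + a) % q = ∑ a : Fin q, (a : ℕ) := by
    simpa [Fin.val_add] using
      Equiv.sum_comp (Equiv.addLeft (Fin.ofNat q b)) (fun a : Fin q ↦ (a : ℕ))
  rw [shift_invariant, Fin.sum_univ_eq_sum_range (fun a ↦ a), sum_range_id_mul_two]

/-- The generalized Hamming weight `‖u^{↑a}‖` of the digit-shift by `a` of a `q`-ary string `u`.
The shift `a` is any natural number, and the positions are indexed by any finite type. -/
def shiftWeight {ι : Type*} [Fintype ι] {q : ℕ} (u : ι → Fin q) (a : ℕ) : ℕ :=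
  ∑ i, ((u i : ℕ) + a) % q

theorem sum_shiftWeight_mul_two {ι : Type*} [Fintype ι] {q : ℕ} (u : ι → Fin q) :
    (∑ a : Fin q, shiftWeight u a) * 2 = q * (Fintype.card ι * (q - 1)) := by
  simp only [shiftWeight]
  rw [sum_comm, sum_mul]
  simp only [sum_add_mod_mul_two, sum_const, card_univ, smul_eq_mul]
  ring

theorem shiftWeight_modNat_mul_two (m q a : ℕ) :
    shiftWeight (Fin.modNat : Fin (m * q) → Fin q) a * 2 = m * q * (q - 1) := by
  have blocks : shiftWeight (Fin.modNat : Fin (m * q) → Fin q) a =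
      ∑ p : Fin m × Fin q, (a + p.2) % q :=
    Fintype.sum_equiv finProdFinEquiv.symm _ _ fun i ↦ by simp [add_comm]
  rw [blocks, Fintype.sum_prod_type, sum_mul]
  simp only [sum_add_mod_mul_two, sum_const, card_univ, Fintype.card_fin, smul_eq_mul, mul_assoc]

theorem mul_pow_le_sum_pow_shiftWeight {ι : Type*} [Fintype ι] {q : ℕ}
    (heven : Even (Fintype.card ι * (q - 1))) {x : ℝ} (hx : 0 ≤ x) (u : ι → Fin q) :
    q * x ^ (Fintype.card ι * (q - 1) / 2) ≤ ∑ a : Fin q, x ^ shiftWeight u a := by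
  have total : ∑ a : Fin q, shiftWeight u a = q * (Fintype.card ι * (q - 1) / 2) := by
    rw [← Nat.mul_div_assoc _ heven.two_dvd, ← sum_shiftWeight_mul_two u,
      Nat.mul_div_cancel _ two_pos]
  simpa using card_mul_pow_le_sum_pow (univ : Finset (Fin q)) hx (by simpa using total)

theorem stmt_11_general (q n : ℕ) (hqn : q ∣ n) (x : ℝ) (hx : 0 ≤ x) :
    (∀ u : Fin n → Fin q,
      ∑ a : Fin q, x ^ (∑ i : Fin n, (((u i : ℕ) + (a : ℕ)) % q))
        ≥ (q : ℝ) * x ^ (n * (q - 1) / 2)) ∧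
    (∃ u : Fin n → Fin q,
      ∑ a : Fin q, x ^ (∑ i : Fin n, (((u i : ℕ) + (a : ℕ)) % q))
        = (q : ℝ) * x ^ (n * (q - 1) / 2)) := by
  constructor
  · have even_weight : Even (n * (q - 1)) :=
      even_iff_two_dvd.2 <| (Nat.even_mul_pred_self q).two_dvd.trans (mul_dvd_mul_right hqn _)
    simpa [shiftWeight] using
      mul_pow_le_sum_pow_shiftWeight (ι := Fin n) (by simpa using even_weight) hx
  · obtain ⟨m, rfl⟩ := exists_eq_mul_left_of_dvd hqn
    have weight (a : ℕ) :
        shiftWeight (Fin.modNat : Fin (m * q) → Fin q) a = m * q * (q - 1) / 2 := by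
      rw [← shiftWeight_modNat_mul_two m q a, Nat.mul_div_cancel _ two_pos]
    have sum_eq : ∑ a : Fin q, x ^ shiftWeight (Fin.modNat : Fin (m * q) → Fin q) a =
        q * x ^ (m * q * (q - 1) / 2) := by
      simp [weight]
    exact ⟨Fin.modNat, sum_eq⟩

/-- For `q ∣ n` and `γ ∈ [0,1]`: `Σ_a (1-γ)^{‖u^{↑a}‖} ≥ q(1-γ)^{n(q-1)/2}` for every
dit string `u`, with equality attained by some `u`; hence
`min_u (1/q)Σ_a (1-γ)^{‖u^{↑a}‖} = (1-γ)^{n(q-1)/2}`. -/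
theorem stmt_11 (q n : ℕ) (hq : 1 ≤ q) (hqn : q ∣ n)
    (γ : ℝ) (hγ0 : 0 ≤ γ) (hγ1 : γ ≤ 1) :
    (∀ u : Fin n → Fin q,
      ∑ a : Fin q, (1 - γ) ^ (∑ i : Fin n, (((u i : ℕ) + (a : ℕ)) % q))
        ≥ (q : ℝ) * (1 - γ) ^ (n * (q - 1) / 2)) ∧
    (∃ u : Fin n → Fin q,
      ∑ a : Fin q, (1 - γ) ^ (∑ i : Fin n, (((u i : ℕ) + (a : ℕ)) % q))
        = (q : ℝ) * (1 - γ) ^ (n * (q - 1) / 2)) :=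
  stmt_11_general q n hqn (1 - γ) (sub_nonneg.2 hγ1)
end

section
/- Let q ≥ 1 and n be natural numbers and let x be a real number with 0 < x ≤ 1. For every dit string u : Fin n → Fin q (with u^{↑a} the digit-shift by a mod q and ‖·‖ the sum of digits), Σ_{a=0}^{q-1} x^{-‖u^{↑a}‖} ≤ Σ_{a=0}^{q-1} x^{-a·n}. -/
/-!
As `a` varies, the digit `(uᵢ + a) mod q` at a fixed site `i` runs through a permutation of
`{0, …, q - 1}`, so the vector of weights `(‖u^{↑a}‖)ₐ` is an average, over the `n` sites, of
permutations of `(0, n, …, (q - 1) n)`. By Jensen's inequality such an average cannot increase the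
sum of the values of a convex function; the function here is `t ↦ x ^ (-t)`.
-/

open Finset

section Majorization

variable {𝕜 E β α ι : Type*} [Field 𝕜] [LinearOrder 𝕜] [IsStrictOrderedRing 𝕜]
  [AddCommGroup E] [Module 𝕜 E] [AddCommGroup β] [PartialOrder β] [IsOrderedAddMonoid β]
  [Module 𝕜 β] [IsStrictOrderedModule 𝕜 β] [Fintype α] [Fintype ι] {s : Set E} {f : E → β}
  {g : α → E}

theorem sum_map_sum_smul_perm_le (hf : ConvexOn 𝕜 s f) {w : ι → 𝕜} (hw₀ : ∀ i, 0 ≤ w i)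
    (hw₁ : ∑ i, w i = 1) (σ : ι → Equiv.Perm α) (hg : ∀ a, g a ∈ s) :
    ∑ a, f (∑ i, w i • g (σ i a)) ≤ ∑ a, f (g a) :=
  calc
    ∑ a, f (∑ i, w i • g (σ i a)) ≤ ∑ a, ∑ i, w i • f (g (σ i a)) :=
      sum_le_sum fun a _ ↦ hf.map_sum_le (fun i _ ↦ hw₀ i) hw₁ fun i _ ↦ hg (σ i a)
    _ = ∑ i, w i • ∑ a, f (g (σ i a)) := by rw [sum_comm]; simp only [smul_sum]
    _ = ∑ i, w i • ∑ a, f (g a) := by simp only [Equiv.sum_comp (σ _) fun a ↦ f (g a)]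
    _ = ∑ a, f (g a) := by rw [← sum_smul, hw₁, one_smul]

theorem sum_map_sum_perm_le (hf : ConvexOn 𝕜 s f) (σ : ι → Equiv.Perm α)
    (hg : ∀ a, Fintype.card ι • g a ∈ s) :
    ∑ a, f (∑ i, g (σ i a)) ≤ ∑ a, f (Fintype.card ι • g a) := by
  cases isEmpty_or_nonempty ι
  · simp
  have hcard : (Fintype.card ι : 𝕜) ≠ 0 := Nat.cast_ne_zero.2 Fintype.card_ne_zero
  have havg (v : E) : (Fintype.card ι : 𝕜)⁻¹ • Fintype.card ι • v = v := by
    rw [← Nat.cast_smul_eq_nsmul 𝕜, inv_smul_smul₀ hcard]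
  have hsum : ∑ _i : ι, (Fintype.card ι : 𝕜)⁻¹ = 1 := by simp [hcard]
  simpa only [havg] using
    sum_map_sum_smul_perm_le hf (fun _ ↦ inv_nonneg.2 (Nat.cast_nonneg _)) hsum σ hg

end Majorization

section DitStrings

variable {q : ℕ} {ι : Type*}

/-- The digit-shift `u^{↑a}` of a dit string `u`. Addition in `Fin q` is modulo `q`. -/
def digitShift (u : ι → Fin q) (a : Fin q) : ι → Fin q := fun i ↦ u i + a

variable [Fintype ι]

/-- The generalized Hamming weight `‖u‖` of a dit string `u`: the sum of its digits, taken in `ℕ`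
rather than modulo `q`. -/
def digitWeight (u : ι → Fin q) : ℕ := ∑ i, (u i : ℕ)

theorem sum_map_digitWeight_digitShift_le {𝕜 β : Type*} [Field 𝕜] [LinearOrder 𝕜]
    [IsStrictOrderedRing 𝕜] [AddCommGroup β] [PartialOrder β] [IsOrderedAddMonoid β] [Module 𝕜 β]
    [IsStrictOrderedModule 𝕜 β] {f : 𝕜 → β} (hf : ConvexOn 𝕜 (Set.Ici 0) f) (u : ι → Fin q) :
    ∑ a, f (digitWeight (digitShift u a)) ≤ ∑ a : Fin q, f ((a : ℕ) * Fintype.card ι) := by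
  cases q with
  | zero => simp
  | succ q =>
    have hg (a : Fin (q + 1)) : Fintype.card ι • ((a : ℕ) : 𝕜) ∈ Set.Ici 0 :=
      nsmul_nonneg (Nat.cast_nonneg _) _
    simpa only [digitWeight, digitShift, Nat.cast_sum, Equiv.coe_addLeft, nsmul_eq_mul, mul_comm]
      using sum_map_sum_perm_le hf (fun i ↦ Equiv.addLeft (u i)) hg

theorem convexOn_rpow_neg {x : ℝ} (hx : 0 < x) : ConvexOn ℝ Set.univ fun t : ℝ ↦ x ^ (-t) := by
  simpa only [Real.inv_rpow hx.le, Real.rpow_neg hx.le] using convexOn_rpow_left (inv_pos.2 hx)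

theorem stmt_13_general {x : ℝ} (hx : 0 < x) (u : ι → Fin q) :
    ∑ a, x ^ (-(digitWeight (digitShift u a) : ℤ)) ≤
      ∑ a : Fin q, x ^ (-(((a : ℕ) : ℤ) * (Fintype.card ι : ℤ))) := by
  have hconvex := (convexOn_rpow_neg hx).subset (Set.subset_univ _) (convex_Ici 0)
  exact_mod_cast sum_map_digitWeight_digitShift_le hconvex u

end DitStrings

/-- For `0 < x ≤ 1` and any dit string `u`,
`Σ_a x^{-‖u^{↑a}‖} ≤ Σ_a x^{-a·n}`. -/
theorem stmt_13 (q n : ℕ) (hq : 1 ≤ q) (x : ℝ) (hx0 : 0 < x) (hx1 : x ≤ 1)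
    (u : Fin n → Fin q) :
    ∑ a : Fin q, x ^ (-((∑ i : Fin n, (((u i : ℕ) + (a : ℕ)) % q) : ℕ) : ℤ))
      ≤ ∑ a : Fin q, x ^ (-(((a : ℕ) : ℤ) * (n : ℤ))) := by
  simpa only [digitWeight, digitShift, Fin.val_add, Fintype.card_fin] using stmt_13_general hx0 u
end

section
/- Fix natural numbers q ≥ 2 and n ≥ 1, and define F(γ) = [ q + n·Σ_{l=1}^{q-1} Σ_{a=0}^{q-1} C(a,l)·γ^l·(1-γ)^{-l} ] / [ Σ_{a=0}^{q-1} (1-γ)^{-a·n} ], where C(a,l) is the binomial coefficient (equal to 0 when l > a). Then F(γ) = 1 - ((q-1)(2q-1)(n² - n)/12)·γ² + O(γ³) as γ → 0⁺. -/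
/-!
Summing the jump contributions over `l` with the binomial theorem for `1 + γ / (1 - γ) = (1 - γ)⁻¹`
turns the numerator of `F` into `∑ a < q, (1 + n ((1 - γ)⁻ᵃ - 1))`. In this form each summand agrees
with the summand `(1 - γ)^(-a n)` of the denominator to first order, and by the binomial series they
differ by `-(n² - n) a² / 2 · γ² + O(γ³)`. Summing the squares `a²` gives the coefficient of `γ²`;
since the denominator is `q + O(γ)`, the quotient divides this coefficient by `q`.
-/

open Asymptotics Filter Finset Topology

lemma isBigO_one_add_rpow_sub_sum_choose (s : ℝ) (k : ℕ) :
    (fun x : ℝ ↦ (1 + x) ^ s - ∑ i ∈ range k, Ring.choose s i * x ^ i) =O[𝓝 0] (· ^ k) := by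
  have h := (Real.one_add_rpow_hasFPowerSeriesAt_zero (a := s)).isBigO_sub_partialSum_pow k
  simp only [zero_add, ← norm_pow, isBigO_norm_right] at h
  simpa [FormalMultilinearSeries.partialSum, -FormalMultilinearSeries.apply_eq_prod_smul_coeff]
    using h

lemma ring_choose_two_right {K : Type*} [Field K] [CharZero K] (s : K) :
    Ring.choose s 2 = s * (s - 1) / 2 := by
  simp [Ring.choose_eq_smul, descPochhammer_succ_right, Polynomial.smeval_mul, div_eq_inv_mul]

lemma isBigO_one_sub_rpow_neg_sub (s : ℝ) :
    (fun x : ℝ ↦ (1 - x) ^ (-s) - (1 + s * x + s * (s + 1) / 2 * x ^ 2)) =O[𝓝 0] (· ^ 3) := by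
  have h := (isBigO_one_add_rpow_sub_sum_choose (-s) 3).comp_tendsto
    (continuous_neg.tendsto' (0 : ℝ) 0 neg_zero)
  refine (h.congr_left fun x ↦ ?_).trans (.of_bound' (.of_forall fun x ↦ by simp))
  simp only [Function.comp_apply, sum_range_succ, sum_range_zero, Ring.choose_zero_right,
    Ring.choose_one_right, ring_choose_two_right, ← sub_eq_add_neg]
  ring

lemma isBigO_one_add_mul_rpow_sub_rpow (ν s : ℝ) :
    (fun x : ℝ ↦ 1 + ν * ((1 - x) ^ (-s) - 1) - (1 - x) ^ (-(s * ν))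
      + (ν ^ 2 - ν) / 2 * s ^ 2 * x ^ 2) =O[𝓝 0] (· ^ 3) := by
  refine (((isBigO_one_sub_rpow_neg_sub s).const_mul_left ν).sub
    (isBigO_one_sub_rpow_neg_sub (s * ν))).congr_left fun x ↦ ?_
  ring

lemma isBigO_div_sub_one_sub_mul_pow {𝕜 : Type*} [NontriviallyNormedField 𝕜] {N D : 𝕜 → 𝕜} {c : 𝕜}
    {k : ℕ} (hD : DifferentiableAt 𝕜 D 0) (hD0 : D 0 ≠ 0)
    (h : (fun x ↦ N x - D x + c * D 0 * x ^ k) =O[𝓝 0] (· ^ (k + 1))) :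
    (fun x ↦ N x / D x - (1 - c * x ^ k)) =O[𝓝 0] (· ^ (k + 1)) := by
  have inv_bounded : (fun x ↦ (D x)⁻¹) =O[𝓝 0] fun _ ↦ (1 : 𝕜) :=
    (hD.continuousAt.tendsto.inv₀ hD0).isBigO_one 𝕜
  have denom_sub : (fun x ↦ D x - D 0) =O[𝓝 0] fun x ↦ x := by
    simpa only [sub_zero] using hD.isBigO_sub
  have cross_term : (fun x ↦ c * x ^ k * (D x - D 0)) =O[𝓝 0] (· ^ (k + 1)) := by
    simpa only [pow_succ] using ((isBigO_refl (· ^ k) (𝓝 0)).const_mul_left c).mul denom_sub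
  refine ((h.add cross_term).mul inv_bounded).congr' ?_ (by simp)
  filter_upwards [hD.continuousAt.eventually_ne hD0] with x hx
  field_simp
  ring

lemma one_add_sum_Icc_choose_mul_pow {R : Type*} [CommSemiring R] {a q : ℕ} (haq : a < q) (y : R) :
    1 + ∑ l ∈ Icc 1 (q - 1), (a.choose l : R) * y ^ l = (1 + y) ^ a := by
  calc 1 + ∑ l ∈ Icc 1 (q - 1), (a.choose l : R) * y ^ l
      = ∑ l ∈ range q, (a.choose l : R) * y ^ l := by
        rw [range_eq_Ico, sum_eq_sum_Ico_succ_bot (Nat.zero_lt_of_lt haq),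
          Icc_sub_one_right_eq_Ico_of_not_isMin (by simp; lia)]
        simp
    _ = ∑ l ∈ range (a + 1), (a.choose l : R) * y ^ l := by
        refine (sum_subset (range_subset_range.mpr haq) fun l _ hl ↦ ?_).symm
        rw [Nat.choose_eq_zero_of_lt (by simpa using hl), Nat.cast_zero, zero_mul]
    _ = (1 + y) ^ a := by
        simp [add_comm 1 y, add_pow, mul_comm]

lemma add_mul_sum_choose_eq_sum {K : Type*} [Field K] {x : K} (hx : x ≠ 1) (q : ℕ) (ν : K) :
    (q : K) + ν * ∑ l ∈ Icc 1 (q - 1), ∑ a ∈ range q,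
        (a.choose l : K) * x ^ l * (1 - x) ^ (-(l : ℤ))
      = ∑ a ∈ range q, (1 + ν * ((1 - x) ^ (-(a : ℤ)) - 1)) := by
  have one_add_mul_inv : 1 + x * (1 - x)⁻¹ = (1 - x)⁻¹ := by
    rw [← div_eq_mul_inv, one_add_div (sub_ne_zero.mpr hx.symm), sub_add_cancel, one_div]
  rw [sum_comm, sum_add_distrib, ← mul_sum]
  congr 2
  · simp
  refine sum_congr rfl fun a ha ↦ ?_
  simp only [zpow_neg, zpow_natCast, ← inv_pow, mul_assoc, ← mul_pow]
  rw [eq_sub_iff_add_eq', one_add_sum_Icc_choose_mul_pow (mem_range.mp ha), one_add_mul_inv]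

lemma six_mul_sum_range_sq {R : Type*} [CommRing R] (q : ℕ) :
    6 * ∑ a ∈ range q, (a : R) ^ 2 = q * (q - 1) * (2 * q - 1) := by
  induction q with
  | zero => simp
  | succ q ih =>
    rw [sum_range_succ, mul_add, ih]
    push_cast
    ring

lemma exists_forall_Ioo_norm_le_of_isBigO {E F : Type*} [Norm E] [SeminormedAddCommGroup F]
    {f : ℝ → E} {g : ℝ → F} {a b : ℝ} (hab : a < b) (h : f =O[𝓝[>] a] g) :
    ∃ C > 0, ∃ δ ∈ Set.Ioo a b, ∀ x ∈ Set.Ioo a δ, ‖f x‖ ≤ C * ‖g x‖ := by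
  obtain ⟨C, hC, hfg⟩ := h.exists_pos
  obtain ⟨δ, ⟨haδ, hδ⟩, hbound⟩ :=
    (mem_nhdsGT_iff_exists_mem_Ioc_Ioo_subset (left_lt_add_div_two.mpr hab)).mp hfg.bound
  exact ⟨C, hC, δ, ⟨haδ, hδ.trans_lt (add_div_two_lt_right.mpr hab)⟩, hbound⟩

theorem stmt_14_general {q : ℕ} (hq : q ≠ 0) (ν : ℝ) :
    (fun γ : ℝ ↦
      ((q : ℝ) + ν * ∑ l ∈ Icc 1 (q - 1), ∑ a ∈ range q,
          (Nat.choose a l : ℝ) * γ ^ l * (1 - γ) ^ (-(l : ℤ)))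
        / (∑ a ∈ range q, (1 - γ) ^ (-((a : ℝ) * ν)))
      - (1 - ((q : ℝ) - 1) * (2 * (q : ℝ) - 1) * (ν ^ 2 - ν) / 12 * γ ^ 2))
    =O[𝓝 0] (· ^ 3) := by
  have denom_diff :
      DifferentiableAt ℝ (fun γ : ℝ ↦ ∑ a ∈ range q, (1 - γ) ^ (-((a : ℝ) * ν))) 0 :=
    .fun_sum fun a _ ↦ (differentiableAt_id.const_sub 1).rpow_const (.inl (by simp))
  refine isBigO_div_sub_one_sub_mul_pow denom_diff (by simpa) ?_
  have sum_terms := IsBigO.fun_sum fun a (_ : a ∈ range q) ↦ isBigO_one_add_mul_rpow_sub_rpow ν a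
  refine sum_terms.congr' ?_ .rfl
  filter_upwards [eventually_ne_nhds zero_ne_one] with γ hγ
  rw [add_mul_sum_choose_eq_sum hγ]
  simp only [sum_add_distrib, sum_sub_distrib, ← sum_mul, ← mul_sum, Real.rpow_neg_natCast,
    sub_zero, Real.one_rpow, sum_const, card_range, nsmul_eq_mul, mul_one]
  linear_combination (ν ^ 2 - ν) / 12 * γ ^ 2 * six_mul_sum_range_sq (R := ℝ) q

/-- Worst-case fidelity of the NSA qudit self-complementary AD code:
`F(γ) = [q + nΣ_{l=1}^{q-1}Σ_{a<q} C(a,l)γ^l(1-γ)^{-l}] / Σ_{a<q}(1-γ)^{-an}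
      = 1 - ((q-1)(2q-1)(n²-n)/12)γ² + O(γ³)` as `γ → 0⁺`. -/
theorem stmt_14 (q n : ℕ) (hq : 2 ≤ q) (hn : 1 ≤ n) :
    ∃ C : ℝ, 0 < C ∧ ∃ δ : ℝ, 0 < δ ∧ δ < 1 ∧
      ∀ γ : ℝ, 0 < γ → γ < δ →
        |((q : ℝ) + (n : ℝ) * ∑ l ∈ Finset.Icc 1 (q - 1), ∑ a ∈ Finset.range q,
              (Nat.choose a l : ℝ) * γ ^ l * (1 - γ) ^ (-(l : ℤ)))
            / (∑ a ∈ Finset.range q, (1 - γ) ^ (-((a : ℤ) * (n : ℤ))))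
          - (1 - ((q : ℝ) - 1) * (2 * (q : ℝ) - 1) * ((n : ℝ) ^ 2 - (n : ℝ)) / 12
              * γ ^ 2)| ≤ C * γ ^ 3 := by
  obtain ⟨C, hC, δ, ⟨hδ0, hδ1⟩, hbound⟩ := exists_forall_Ioo_norm_le_of_isBigO one_pos
    ((stmt_14_general (by lia : q ≠ 0) n).mono nhdsWithin_le_nhds)
  refine ⟨C, hC, δ, hδ0, hδ1, fun γ hγ0 hγδ ↦ ?_⟩
  have zpow_eq_rpow (a : ℕ) :
      (1 - γ) ^ (-((a : ℤ) * (n : ℤ))) = (1 - γ) ^ (-((a : ℝ) * (n : ℝ))) := by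
    exact_mod_cast (Real.rpow_neg_natCast (1 - γ) (a * n)).symm
  have h := hbound γ ⟨hγ0, hγδ⟩
  rw [Real.norm_eq_abs, Real.norm_of_nonneg (by positivity)] at h
  simpa only [zpow_eq_rpow] using h
end

section
/- Define F(γ) = 3/(1 + (1-γ)^{-4} + (1-γ)^{-8}) + 12γ/((1-γ) + (1-γ)^{-3} + (1-γ)^{-7}) + 4γ²/((1-γ)² + (1-γ)^{-2} + (1-γ)^{-6}). Then F(γ) = 1 - 10γ² + O(γ³) as γ → 0⁺. -/
/-!
Put `x = 1 - γ` and `D = x ^ 8 + x ^ 4 + 1`. The three denominators of the fidelity are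
`x ^ (-8) * D`, `x ^ (-7) * D` and `x ^ (-6) * D`, so the fidelity is a single fraction over `D`.
Subtracting `1 - 10 * γ ^ 2` leaves `γ ^ 4 * Q / D`, where `Q`, written in powers of `x` rather
than of `γ`, has only positive coefficients, with sum `119`. As `D ≥ 1`, the remainder lies between
`0` and `119 * γ ^ 4`: the cubic term of the expansion vanishes.
-/

lemma div_zpow_add_zpow_add_zpow {K : Type*} [Semifield K] {x : K} (hx : x ≠ 0) (c : K)
    (m n : ℤ) :
    c / (x ^ m + x ^ (m - n) + x ^ (m - 2 * n)) =
      c * x ^ (2 * n - m) / (x ^ (2 * n) + x ^ n + 1) := by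
  have hfactor : x ^ m + x ^ (m - n) + x ^ (m - 2 * n) =
      (x ^ (2 * n - m))⁻¹ * (x ^ (2 * n) + x ^ n + 1) := by
    rw [← zpow_neg, mul_add, mul_add, ← zpow_add₀ hx, ← zpow_add₀ hx, mul_one]
    congr 3 <;> ring
  rw [hfactor, ← div_div, div_inv_eq_mul]

/-- The worst-case fidelity of the noise-strength-adapted ((4,1)) qutrit self-complementary code
under amplitude damping of strength `γ`: the sum of the no-jump, the four one-level-jump and the
four two-level-jump contributions. It has its intended meaning only for `γ ≠ 1`, because of the
negative powers. -/
noncomputable def adFidelity (γ : ℝ) : ℝ :=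
  3 / (1 + (1 - γ) ^ (-4 : ℤ) + (1 - γ) ^ (-8 : ℤ))
    + 12 * γ / ((1 - γ) + (1 - γ) ^ (-3 : ℤ) + (1 - γ) ^ (-7 : ℤ))
    + 4 * γ ^ 2 / ((1 - γ) ^ 2 + (1 - γ) ^ (-2 : ℤ) + (1 - γ) ^ (-6 : ℤ))

/-- The polynomial `Q` for which the second-order remainder of `adFidelity γ` is
`γ ^ 4 * Q (1 - γ) / ((1 - γ) ^ 8 + (1 - γ) ^ 4 + 1)`. The variable is `x = 1 - γ`, in which all
the coefficients are positive. -/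
def adRemainderNumerator (x : ℝ) : ℝ :=
  9 + 16 * x + 20 * x ^ 2 + 20 * x ^ 3 + 24 * x ^ 4 + 20 * x ^ 5 + 10 * x ^ 6

lemma adRemainderNumerator_nonneg {x : ℝ} (hx : 0 ≤ x) : 0 ≤ adRemainderNumerator x := by
  unfold adRemainderNumerator
  positivity

lemma adRemainderNumerator_le {x : ℝ} (hx₀ : 0 ≤ x) (hx₁ : x ≤ 1) :
    adRemainderNumerator x ≤ 119 := by
  have hpow (n : ℕ) : x ^ n ≤ 1 := pow_le_one₀ hx₀ hx₁
  unfold adRemainderNumerator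
  linarith [hpow 2, hpow 3, hpow 4, hpow 5, hpow 6]

lemma adFidelity_eq_div {γ : ℝ} (hγ : γ ≠ 1) :
    adFidelity γ =
      (3 * (1 - γ) ^ 8 + 12 * γ * (1 - γ) ^ 7 + 4 * γ ^ 2 * (1 - γ) ^ 6) /
        ((1 - γ) ^ 8 + (1 - γ) ^ 4 + 1) := by
  have hx : 1 - γ ≠ 0 := sub_ne_zero.mpr hγ.symm
  have hnoJump := div_zpow_add_zpow_add_zpow hx 3 0 4
  have honeLevel := div_zpow_add_zpow_add_zpow hx (12 * γ) 1 4
  have htwoLevel := div_zpow_add_zpow_add_zpow hx (4 * γ ^ 2) 2 4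
  norm_num only [zpow_ofNat, pow_zero, pow_one] at hnoJump honeLevel htwoLevel
  rw [adFidelity, hnoJump, honeLevel, htwoLevel, ← add_div, ← add_div]

lemma adFidelity_sub_eq {γ : ℝ} (hγ : γ ≠ 1) :
    adFidelity γ - (1 - 10 * γ ^ 2) =
      γ ^ 4 * adRemainderNumerator (1 - γ) / ((1 - γ) ^ 8 + (1 - γ) ^ 4 + 1) := by
  have hD : (1 - γ) ^ 8 + (1 - γ) ^ 4 + 1 ≠ 0 := by positivity
  rw [adFidelity_eq_div hγ, div_sub' hD, adRemainderNumerator]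
  congr 1
  ring

theorem stmt_16_general {γ : ℝ} (hγ₀ : 0 ≤ γ) (hγ₁ : γ < 1) :
    adFidelity γ - (1 - 10 * γ ^ 2) ∈ Set.Icc 0 (119 * γ ^ 4) := by
  have hx₀ : 0 ≤ 1 - γ := by linarith
  have hQ₀ := adRemainderNumerator_nonneg hx₀
  have hQ₁ : adRemainderNumerator (1 - γ) ≤ 119 := adRemainderNumerator_le hx₀ (by linarith)
  have hD : 1 ≤ (1 - γ) ^ 8 + (1 - γ) ^ 4 + 1 := le_add_of_nonneg_left (by positivity)
  rw [adFidelity_sub_eq hγ₁.ne]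
  refine ⟨by positivity, ?_⟩
  calc
    γ ^ 4 * adRemainderNumerator (1 - γ) / ((1 - γ) ^ 8 + (1 - γ) ^ 4 + 1)
        ≤ γ ^ 4 * adRemainderNumerator (1 - γ) := div_le_self (by positivity) hD
    _ ≤ γ ^ 4 * 119 := by gcongr
    _ = 119 * γ ^ 4 := mul_comm _ _

/-- Worst-case fidelity of the NSA ((4,1)) qutrit self-complementary AD code:
`F(γ) = 3/(1+(1-γ)^{-4}+(1-γ)^{-8}) + 12γ/((1-γ)+(1-γ)^{-3}+(1-γ)^{-7})
        + 4γ²/((1-γ)²+(1-γ)^{-2}+(1-γ)^{-6}) = 1 - 10γ² + O(γ³)` as `γ → 0⁺`. -/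
theorem stmt_16 :
    ∃ C : ℝ, 0 < C ∧ ∃ δ : ℝ, 0 < δ ∧ δ < 1 ∧
      ∀ γ : ℝ, 0 < γ → γ < δ →
        |3 / (1 + (1 - γ) ^ (-4 : ℤ) + (1 - γ) ^ (-8 : ℤ))
          + 12 * γ / ((1 - γ) + (1 - γ) ^ (-3 : ℤ) + (1 - γ) ^ (-7 : ℤ))
          + 4 * γ ^ 2 / ((1 - γ) ^ 2 + (1 - γ) ^ (-2 : ℤ) + (1 - γ) ^ (-6 : ℤ))
          - (1 - 10 * γ ^ 2)| ≤ C * γ ^ 3 := by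
  refine ⟨119, by norm_num, 1 / 2, by norm_num, by norm_num, fun γ hγ₀ hγδ => ?_⟩
  have hγ₁ : γ < 1 := by linarith
  obtain ⟨hnonneg, hle⟩ := stmt_16_general hγ₀.le hγ₁
  calc
    |adFidelity γ - (1 - 10 * γ ^ 2)| = adFidelity γ - (1 - 10 * γ ^ 2) := abs_of_nonneg hnonneg
    _ ≤ 119 * γ ^ 4 := hle
    _ ≤ 119 * γ ^ 3 := by
      gcongr 119 * ?_
      exact pow_le_pow_of_le_one hγ₀.le hγ₁.le (by norm_num)
end

section
/- Define m(γ) = min{ 2/(1 + (1-γ)^{-4}) , (1-γ)² } and F(γ) = m(γ) + (2γ/(1-γ))·m(γ). Then F(γ) = 1 - 3γ² + O(γ³) as γ → 0⁺. -/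
/-!
Put `u = 1 - γ`. Since `2u² ≤ 1 + u⁴`, the minimum `m(γ)` is always its first entry, which equals
`2u⁴ / (1 + u⁴)`, and so `F(γ) = 2(1 + γ)u³ / (1 + u⁴)`. In the difference `F(γ) - (1 - 3γ²)` a
factor `γ³` splits off exactly, leaving the cofactor `(2 - 3u² - 3u³) / (1 + u⁴)`. The cofactor has
absolute value at most `2` for `u ≤ 1`. It equals `-2` at `u = 1`, that is, at `γ = 0`, so the
constant `2` is optimal.
-/

section OrderedField

variable {K : Type*} [Field K] [LinearOrder K] [IsStrictOrderedRing K]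

lemma two_mul_pow_four_div_one_add_pow_four_le_sq (u : K) :
    2 * u ^ 4 / (1 + u ^ 4) ≤ u ^ 2 := by
  have amgm : 2 * u ^ 2 ≤ 1 + u ^ 4 := by linear_combination two_mul_le_add_sq 1 (u ^ 2)
  rw [div_le_iff₀ (by positivity)]
  calc 2 * u ^ 4 = u ^ 2 * (2 * u ^ 2) := by ring
    _ ≤ u ^ 2 * (1 + u ^ 4) := by gcongr

lemma abs_two_sub_sq_sub_cube_div_one_add_pow_four_le_two {u : K} (hu : u ≤ 1) :
    |(2 - 3 * u ^ 2 - 3 * u ^ 3) / (1 + u ^ 4)| ≤ 2 := by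
  have hden : 0 < 1 + u ^ 4 := by positivity
  have lower : 0 ≤ 2 * (1 + u ^ 4) + (2 - 3 * u ^ 2 - 3 * u ^ 3) := by
    have hcofactor : 0 ≤ 4 + 4 * u + u ^ 2 - 2 * u ^ 3 := by
      calc 0 ≤ 2 * ((1 - u) * (u + 1) ^ 2) + (2 * u ^ 2 + (u + 1) ^ 2 + 1) := by
            have := sub_nonneg.2 hu
            positivity
        _ = 4 + 4 * u + u ^ 2 - 2 * u ^ 3 := by ring
    calc 0 ≤ (1 - u) * (4 + 4 * u + u ^ 2 - 2 * u ^ 3) :=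
          mul_nonneg (sub_nonneg.2 hu) hcofactor
      _ = 2 * (1 + u ^ 4) + (2 - 3 * u ^ 2 - 3 * u ^ 3) := by ring
  have upper : 0 ≤ 2 * (1 + u ^ 4) - (2 - 3 * u ^ 2 - 3 * u ^ 3) := by
    have hcofactor : 0 ≤ 3 + 3 * u + 2 * u ^ 2 := by nlinarith [sq_nonneg (4 * u + 3)]
    calc 0 ≤ u ^ 2 * (3 + 3 * u + 2 * u ^ 2) := mul_nonneg (sq_nonneg u) hcofactor
      _ = 2 * (1 + u ^ 4) - (2 - 3 * u ^ 2 - 3 * u ^ 3) := by ring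
  rw [abs_le, le_div_iff₀ hden, div_le_iff₀ hden]
  constructor <;> linarith

end OrderedField

/-- The no-jump contribution `m(γ)` to the worst-case fidelity of the noise-strength-adapted 0-2-4
binomial code. The no-jump Kraus operator scales `|n⟩` by `(1 - γ)^(n/2)`; the two entries of the
minimum are the squared norms it leaves on the two codewords. -/
noncomputable def binomialNoJumpFidelity (γ : ℝ) : ℝ :=
  min (2 / (1 + (1 - γ) ^ (-4 : ℤ))) ((1 - γ) ^ 2)

/-- The worst-case fidelity `F(γ)` of the noise-strength-adapted 0-2-4 binomial code. Losing one
boson leaves on each codeword `2γ / (1 - γ)` times its no-jump squared norm, which gives the second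
summand. -/
noncomputable def binomialFidelity (γ : ℝ) : ℝ :=
  binomialNoJumpFidelity γ + (2 * γ / (1 - γ)) * binomialNoJumpFidelity γ

section Fidelity

variable {γ : ℝ}

lemma binomialNoJumpFidelity_eq (hγ : γ ≠ 1) :
    binomialNoJumpFidelity γ = 2 * (1 - γ) ^ 4 / (1 + (1 - γ) ^ 4) := by
  have hu : 1 - γ ≠ 0 := sub_ne_zero.2 hγ.symm
  have hfirst :
      2 / (1 + (1 - γ) ^ (-4 : ℤ)) = 2 * (1 - γ) ^ 4 / (1 + (1 - γ) ^ 4) := by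
    have hden : 1 + (1 - γ) ^ 4 ≠ 0 := by positivity
    field_simp
    ring
  rw [binomialNoJumpFidelity, hfirst,
    min_eq_left (two_mul_pow_four_div_one_add_pow_four_le_sq (1 - γ))]

lemma binomialFidelity_eq (hγ : γ ≠ 1) :
    binomialFidelity γ = 2 * (1 + γ) * (1 - γ) ^ 3 / (1 + (1 - γ) ^ 4) := by
  have hu : 1 - γ ≠ 0 := sub_ne_zero.2 hγ.symm
  rw [binomialFidelity, binomialNoJumpFidelity_eq hγ]
  field_simp
  ring

lemma binomialFidelity_sub_eq (hγ : γ ≠ 1) :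
    binomialFidelity γ - (1 - 3 * γ ^ 2) =
      (2 - 3 * (1 - γ) ^ 2 - 3 * (1 - γ) ^ 3) / (1 + (1 - γ) ^ 4) * γ ^ 3 := by
  have hden : 1 + (1 - γ) ^ 4 ≠ 0 := by positivity
  rw [binomialFidelity_eq hγ]
  field_simp
  ring

theorem stmt_19_general (h0 : 0 ≤ γ) (h1 : γ ≠ 1) :
    |binomialFidelity γ - (1 - 3 * γ ^ 2)| ≤ 2 * γ ^ 3 := by
  rw [binomialFidelity_sub_eq h1, abs_mul, abs_of_nonneg (pow_nonneg h0 3)]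
  gcongr
  exact abs_two_sub_sq_sub_cube_div_one_add_pow_four_le_two (sub_le_self 1 h0)

end Fidelity

/-- Worst-case fidelity of the NSA 0-2-4 binomial code:
with `m(γ) = min{2/(1+(1-γ)^{-4}), (1-γ)²}`,
`F(γ) = m(γ) + (2γ/(1-γ))m(γ) = 1 - 3γ² + O(γ³)` as `γ → 0⁺`. -/
theorem stmt_19 :
    ∃ C : ℝ, 0 < C ∧ ∃ δ : ℝ, 0 < δ ∧ δ < 1 ∧
      ∀ γ : ℝ, 0 < γ → γ < δ →
        |min (2 / (1 + (1 - γ) ^ (-4 : ℤ))) ((1 - γ) ^ 2)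
          + (2 * γ / (1 - γ)) * min (2 / (1 + (1 - γ) ^ (-4 : ℤ))) ((1 - γ) ^ 2)
          - (1 - 3 * γ ^ 2)| ≤ C * γ ^ 3 := by
  exact ⟨2, two_pos, 1 / 2, one_half_pos, one_half_lt_one, fun _ hpos hlt =>
    stmt_19_general hpos.le (hlt.trans one_half_lt_one).ne⟩
end
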